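/- Let f : [0,∞) → [0,∞) be a continuous operator monotone function. Then there exist: a Lebesgue-integrable function g : [0,1] → [0,∞); a countable set D ⊆ [0,1] and a family of nonnegative reals {a_t}_{t∈D} with ∑_{t∈D} a_t < ∞; and a finite Borel measure μ_sc on [0,1] that has no atoms and is mutually singular with Lebesgue measure m on [0,1]; such that for every x ∈ [0,∞), f(x) = ∫_{[0,1]} g(t)·(1 !_t x) dm(t) + ∑_{t∈D} a_t·(1 !_t x) + ∫_{[0,1]} (1 !_t x) dμ_sc(t). Moreover, each of the three summands, as a function of x, is operator monotone. -/

import Mathlib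

open MeasureTheory Real ComplexOrder

/-- The `t`-weighted harmonic mean `1 !_t x` of `1` and `x`, for `t ∈ [0,1]`, `x ∈ [0,∞)`. -/
noncomputable def whm (t x : ℝ) : ℝ :=
  if t = 0 ∧ x = 0 then 1 else x / ((1 - t) * x + t)

/-- `f` is operator monotone on `[0,∞)`: for all `n` and all positive semidefinite complex
`n × n` matrices `A ≤ B` (Loewner order), `f(A) ≤ f(B)` via the continuous functional
calculus. -/
def OperatorMonotone (f : ℝ → ℝ) : Prop :=
  ∀ (n : ℕ) (A B : Matrix (Fin n) (Fin n) ℂ),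
    A.PosSemidef → B.PosSemidef → (B - A).PosSemidef →
    (cfc f B - cfc f A).PosSemidef

/-- Lebesgue measure `m` on the unit interval `[0,1]`. -/
noncomputable def lebIcc : Measure (Set.Icc (0 : ℝ) 1) :=
  (volume : Measure ℝ).comap Subtype.val

/-!
Let `f` be operator monotone. If `a` and `b` interlace, then `diagonal b` is conjugate, through an
explicit orthogonal Cauchy matrix, to a rank-one positive perturbation of `diagonal a`, so `f`
preserves this Loewner inequality. Tested on suitable vectors, this says that the divided difference
of `f * V ^ 2` over any `2 * m` nodes in `[0, ∞)` is nonnegative when `V` has degree less than `m`.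
Adding the nodes `0` and `R` and letting `R` tend to infinity shows that the divided difference of
`f * U ^ 2 / x` over `2 * m` positive nodes is nonpositive.

With `t = s / (1 + s)`, a linear combination of the functions `t ↦ whm t y` becomes, up to a
positive factor, a polynomial in `s`. The two inequalities say that the functional induced by
`whm · y ↦ f y` is nonnegative on the squares `U ^ 2` and on the products `X * V ^ 2`, hence on all
polynomials that are nonnegative on `[0, ∞)`. The Riesz extension and Riesz-Markov-Kakutani
theorems turn this functional into a measure `μ` with `f x = ∫ whm t x ∂μ`. The Lebesgue
decomposition of `μ`, with the atoms of the singular part split off, gives the three summands, each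
of which is an integral of the operator monotone functions `whm t` against a positive measure.
-/

section Matrix

variable {n : Type*} [Fintype n] [DecidableEq n]

open Matrix

lemma continuousOn_spectrum_matrix (f : ℝ → ℝ) (A : Matrix n n ℂ) :
    ContinuousOn f (spectrum ℝ A) :=
  (Set.toFinite _).continuousOn f

lemma nonneg_of_mem_spectrum_of_posSemidef {A : Matrix n n ℂ} (hA : A.PosSemidef) {x : ℝ}
    (hx : x ∈ spectrum ℝ A) : 0 ≤ x := by
  rw [hA.isHermitian.spectrum_real_eq_range_eigenvalues] at hx
  obtain ⟨i, rfl⟩ := hx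
  exact hA.eigenvalues_nonneg i

lemma dotProduct_mul_diagonal_mul_conjTranspose_mulVec (U : Matrix n n ℂ) (d : n → ℝ)
    (v : n → ℂ) :
    star v ⬝ᵥ ((U * diagonal (fun i => (d i : ℂ)) * Uᴴ) *ᵥ v) =
      ((∑ i, d i * ‖(Uᴴ *ᵥ v) i‖ ^ 2 : ℝ) : ℂ) := by
  have hstar : star v ᵥ* U = star (Uᴴ *ᵥ v) := by
    rw [star_mulVec, conjTranspose_conjTranspose]
  rw [← mulVec_mulVec, ← mulVec_mulVec, dotProduct_mulVec, hstar]
  simp only [dotProduct, mulVec_diagonal, Complex.ofReal_sum, Complex.ofReal_mul,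
    Complex.ofReal_pow]
  refine Finset.sum_congr rfl fun i _ => ?_
  rw [Pi.star_apply, RCLike.star_def, ← Complex.conj_mul']
  ring

lemma exists_dotProduct_cfc_mulVec_eq_sum {A : Matrix n n ℂ} (hA : A.PosSemidef) (v : n → ℂ) :
    ∃ l p : n → ℝ, (∀ i, 0 ≤ l i) ∧
      ∀ f : ℝ → ℝ, star v ⬝ᵥ (cfc f A *ᵥ v) = ((∑ i, f (l i) * p i : ℝ) : ℂ) := by
  refine ⟨hA.1.eigenvalues, fun i => ‖((hA.1.eigenvectorUnitary : Matrix n n ℂ)ᴴ *ᵥ v) i‖ ^ 2,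
    hA.eigenvalues_nonneg, fun f => ?_⟩
  rw [hA.1.cfc_eq, IsHermitian.cfc, Unitary.conjStarAlgAut_apply]
  exact dotProduct_mul_diagonal_mul_conjTranspose_mulVec _ (f ∘ hA.1.eigenvalues) v

lemma cfc_map_algHom_pi {ι R : Type*} [Finite ι] [Ring R] [StarRing R] [Algebra ℝ R]
    [TopologicalSpace R] {p : R → Prop} [ContinuousFunctionalCalculus ℝ R p]
    (φ : (ι → ℝ) →ₐ[ℝ] R) (f : ℝ → ℝ) {d : ι → ℝ} (hd : p (φ d)) : cfc f (φ d) = φ (f ∘ d) := by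
  have := Fintype.ofFinite ι
  let q := Lagrange.interpolate (Finset.univ.image d) id f
  have hq (i : ι) : q.eval (d i) = f (d i) :=
    Lagrange.eval_interpolate_at_node f Function.injective_id.injOn
      (Finset.mem_image_of_mem d (Finset.mem_univ i))
  have hspec : (spectrum ℝ (φ d)).EqOn f q.eval := by
    intro x hx
    obtain ⟨i, hi⟩ := Set.mem_iUnion.1
      ((Pi.spectrum_eq (R := ℝ) d).subset (AlgHom.spectrum_apply_subset φ d hx))
    obtain rfl : x = d i := by simpa using (spectrum.scalar_eq (A := ℝ) (d i)).subset hi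
    exact (hq i).symm
  rw [cfc_congr hspec, cfc_polynomial q (φ d), Polynomial.aeval_algHom_apply]
  congr 1
  ext i
  simp [hq]

lemma cfc_mul_diagonal_mul_star {U : Matrix n n ℂ} (hU : U ∈ unitary (Matrix n n ℂ)) (f : ℝ → ℝ)
    (d : n → ℝ) :
    cfc f (U * diagonal (fun i => (d i : ℂ)) * Uᴴ) =
      U * diagonal (fun i => (f (d i) : ℂ)) * Uᴴ := by
  let φ : (n → ℝ) →ₐ[ℝ] Matrix n n ℂ :=
    (Unitary.conjStarAlgAut ℝ _ ⟨U, hU⟩).toAlgEquiv.toAlgHom.comp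
      ((diagonalAlgHom ℝ).comp (Complex.ofRealAm.compLeft n))
  have hself : IsSelfAdjoint (diagonal fun i => (d i : ℂ)) := by
    simp [IsSelfAdjoint, star_eq_conjTranspose, diagonal_conjTranspose, Pi.star_def]
  exact cfc_map_algHom_pi φ f (d := d) (hself.conjugate U)

lemma posSemidef_inv_sub_inv {A B : Matrix n n ℂ} (hA : A.PosDef) (hB : B.PosDef)
    (h : (B - A).PosSemidef) : (A⁻¹ - B⁻¹).PosSemidef := by
  have hblock : (fromBlocks B 1 1ᴴ A⁻¹).PosSemidef := by
    have := hA.inv.isUnit.invertible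
    rw [PosDef.fromBlocks₂₂ _ _ hA.inv,
      nonsing_inv_nonsing_inv _ ((isUnit_iff_isUnit_det _).1 hA.isUnit)]
    simpa using h
  have := hB.isUnit.invertible
  rw [PosDef.fromBlocks₁₁ _ _ hB] at hblock
  simpa using hblock

end Matrix

namespace OperatorMonotone

variable {f g : ℝ → ℝ}

lemma congr (hf : OperatorMonotone f) (h : ∀ x, 0 ≤ x → g x = f x) : OperatorMonotone g := by
  have hcfc {n : ℕ} {A : Matrix (Fin n) (Fin n) ℂ} (hA : A.PosSemidef) : cfc g A = cfc f A :=
    cfc_congr fun x hx => h x (nonneg_of_mem_spectrum_of_posSemidef hA hx)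
  intro n A B hA hB hAB
  rw [hcfc hA, hcfc hB]
  exact hf n A B hA hB hAB

lemma const (c : ℝ) : OperatorMonotone fun _ => c := by
  intro n A B hA hB _
  rw [cfc_const c A hA.1.isSelfAdjoint, cfc_const c B hB.1.isSelfAdjoint, sub_self]
  exact .zero

lemma fun_id : OperatorMonotone fun x => x := by
  intro n A B hA hB hAB
  rwa [cfc_id' ℝ A hA.1.isSelfAdjoint, cfc_id' ℝ B hB.1.isSelfAdjoint]

lemma add (hf : OperatorMonotone f) (hg : OperatorMonotone g) :
    OperatorMonotone fun x => f x + g x := by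
  intro n A B hA hB hAB
  rw [cfc_add A f g (continuousOn_spectrum_matrix _ _) (continuousOn_spectrum_matrix _ _),
    cfc_add B f g (continuousOn_spectrum_matrix _ _) (continuousOn_spectrum_matrix _ _),
    add_sub_add_comm]
  exact (hf n A B hA hB hAB).add (hg n A B hA hB hAB)

lemma const_mul {c : ℝ} (hc : 0 ≤ c) (hf : OperatorMonotone f) :
    OperatorMonotone fun x => c * f x := by
  intro n A B hA hB hAB
  rw [cfc_const_mul c f A (continuousOn_spectrum_matrix _ _),
    cfc_const_mul c f B (continuousOn_spectrum_matrix _ _), ← smul_sub]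
  exact (hf n A B hA hB hAB).smul hc

lemma neg_inv_linear {α β : ℝ} (hα : 0 ≤ α) (hβ : 0 < β) :
    OperatorMonotone fun x => -(α * x + β)⁻¹ := by
  intro n A B hA hB hAB
  have hpos {C : Matrix (Fin n) (Fin n) ℂ} (hC : C.PosSemidef) :
      (α • C + β • (1 : Matrix (Fin n) (Fin n) ℂ)).PosDef :=
    .posSemidef_add (hC.smul hα) (Matrix.PosDef.one.smul hβ)
  have hcfc {C : Matrix (Fin n) (Fin n) ℂ} (hC : C.PosSemidef) :
      cfc (fun x : ℝ => -(α * x + β)⁻¹) C = -(α • C + β • (1 : Matrix (Fin n) (Fin n) ℂ))⁻¹ := by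
    have hsa : IsSelfAdjoint C := hC.1.isSelfAdjoint
    have hne {x : ℝ} (hx : x ∈ spectrum ℝ C) : α * x + β ≠ 0 := by
      have := nonneg_of_mem_spectrum_of_posSemidef hC hx
      positivity
    have haffine : cfc (fun x : ℝ => α * x + β) C = α • C + β • (1 : Matrix (Fin n) (Fin n) ℂ) := by
      rw [cfc_add C _ _ (continuousOn_spectrum_matrix _ _) (continuousOn_spectrum_matrix _ _),
        cfc_const_mul_id α C, cfc_const β C, Algebra.algebraMap_eq_smul_one]
    rw [cfc_neg, ← haffine]
    congr 1
    refine (Matrix.inv_eq_right_inv ?_).symm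
    rw [← cfc_mul _ _ C (continuousOn_spectrum_matrix _ _) (continuousOn_spectrum_matrix _ _),
      ← cfc_one ℝ C]
    exact cfc_congr fun x hx => mul_inv_cancel₀ (hne hx)
  rw [hcfc hA, hcfc hB, neg_sub_neg]
  refine posSemidef_inv_sub_inv (hpos hA) (hpos hB) ?_
  rw [add_sub_add_right_eq_sub, ← smul_sub]
  exact hAB.smul hα

lemma integral {T : Type*} [MeasurableSpace T] {ν : Measure T} {k : T → ℝ → ℝ}
    (hk : ∀ t, OperatorMonotone (k t)) (hint : ∀ x, 0 ≤ x → Integrable (fun t => k t x) ν) :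
    OperatorMonotone fun x => ∫ t, k t x ∂ν := by
  intro n A B hA hB hAB
  refine .of_dotProduct_mulVec_nonneg
    (.sub (cfc_predicate (p := IsSelfAdjoint) _ B) (cfc_predicate (p := IsSelfAdjoint) _ A))
    fun v => ?_
  obtain ⟨a, p, ha, hpA⟩ := exists_dotProduct_cfc_mulVec_eq_sum hA v
  obtain ⟨b, q, hb, hqB⟩ := exists_dotProduct_cfc_mulVec_eq_sum hB v
  have hintA (i) := (hint (a i) (ha i)).mul_const (p i)
  have hintB (i) := (hint (b i) (hb i)).mul_const (q i)
  have hform (f : ℝ → ℝ) : star v ⬝ᵥ ((cfc f B - cfc f A).mulVec v) =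
      ((∑ i, f (b i) * q i - ∑ i, f (a i) * p i : ℝ) : ℂ) := by
    rw [Matrix.sub_mulVec, dotProduct_sub, hpA, hqB, Complex.ofReal_sub]
  rw [hform, Complex.zero_le_real]
  simp only [← integral_mul_const]
  rw [← integral_finsetSum _ fun i _ => hintB i, ← integral_finsetSum _ fun i _ => hintA i,
    ← integral_sub (integrable_finsetSum _ fun i _ => hintB i)
      (integrable_finsetSum _ fun i _ => hintA i)]
  refine integral_nonneg fun t => ?_
  have hnonneg := (hk t n A B hA hB hAB).dotProduct_mulVec_nonneg v
  rwa [hform, Complex.zero_le_real] at hnonneg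

end OperatorMonotone

section WeightedHarmonicMean

variable {t x : ℝ}

lemma whm_of_pos (t : ℝ) (hx : 0 < x) : whm t x = x / ((1 - t) * x + t) := by
  simp [whm, hx.ne']

lemma whm_denom_pos (ht : t ∈ Set.Icc (0 : ℝ) 1) (hx : 0 < x) : 0 < (1 - t) * x + t := by
  rcases ht.1.eq_or_lt with rfl | ht0
  · simpa using hx
  · have := sub_nonneg.2 ht.2
    positivity

lemma whm_nonneg (ht : t ∈ Set.Icc (0 : ℝ) 1) (hx : 0 ≤ x) : 0 ≤ whm t x := by
  have := ht.1
  have := sub_nonneg.2 ht.2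
  unfold whm
  split_ifs <;> positivity

lemma whm_pos (ht : t ∈ Set.Icc (0 : ℝ) 1) (hx : 0 < x) : 0 < whm t x := by
  rw [whm_of_pos t hx]
  exact div_pos hx (whm_denom_pos ht hx)

lemma whm_le_max (ht : t ∈ Set.Icc (0 : ℝ) 1) (hx : 0 ≤ x) : whm t x ≤ max 1 x := by
  rcases hx.eq_or_lt with rfl | hx0
  · unfold whm
    split_ifs <;> simp
  have := ht.1
  have := sub_nonneg.2 ht.2
  rw [whm_of_pos t hx0, div_le_iff₀ (whm_denom_pos ht hx0)]
  calc x = 1 * ((1 - t) * x) + x * t := by ring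
    _ ≤ max 1 x * ((1 - t) * x) + max 1 x * t := by
      gcongr
      exacts [le_max_left 1 x, le_max_right 1 x]
    _ = max 1 x * ((1 - t) * x + t) := by ring

lemma operatorMonotone_whm (ht : t ∈ Set.Icc (0 : ℝ) 1) : OperatorMonotone (whm t) := by
  rcases ht.1.eq_or_lt with rfl | ht0
  · refine (OperatorMonotone.const 1).congr fun x _ => ?_
    by_cases hx : x = 0 <;> simp [whm, hx]
  rcases ht.2.eq_or_lt with rfl | ht1
  · exact OperatorMonotone.fun_id.congr fun x _ => by simp [whm]
  have hs : 0 < 1 - t := sub_pos.2 ht1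
  refine ((OperatorMonotone.const (1 - t)⁻¹).add
    (.const_mul (div_nonneg ht0.le hs.le) (.neg_inv_linear hs.le ht0))).congr fun x hx => ?_
  have : (1 - t) * x + t ≠ 0 := by positivity
  rw [whm, if_neg fun h => ht0.ne' h.1]
  field_simp
  ring

lemma continuous_whm_left (hx : 0 < x) : Continuous fun t : Set.Icc (0 : ℝ) 1 => whm t x := by
  simp only [whm_of_pos _ hx]
  exact continuous_const.div (by fun_prop) fun t => (whm_denom_pos t.2 hx).ne'

lemma measurable_whm_left (x : ℝ) : Measurable fun t : ℝ => whm t x := by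
  unfold whm
  exact .ite ((measurableSet_singleton 0).inter (.const _)) (by fun_prop) (by fun_prop)

lemma integrable_whm (ν : Measure (Set.Icc (0 : ℝ) 1)) [IsFiniteMeasure ν] (hx : 0 ≤ x) :
    Integrable (fun t : Set.Icc (0 : ℝ) 1 => whm t x) ν := by
  refine .of_bound ((measurable_whm_left x).comp measurable_subtype_coe).aestronglyMeasurable
    (max 1 x) (.of_forall fun t => ?_)
  rw [Real.norm_of_nonneg (whm_nonneg t.2 hx)]
  exact whm_le_max t.2 hx

lemma operatorMonotone_integral_whm (ν : Measure (Set.Icc (0 : ℝ) 1)) [IsFiniteMeasure ν] :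
    OperatorMonotone fun x => ∫ t : Set.Icc (0 : ℝ) 1, whm t x ∂ν :=
  .integral (fun t => operatorMonotone_whm t.2) fun _ hx => integrable_whm ν hx

lemma continuousWithinAt_whm_zero (ht : t ∈ Set.Icc (0 : ℝ) 1) :
    ContinuousWithinAt (whm t) (Set.Ici 0) 0 := by
  rcases ht.1.eq_or_lt with rfl | ht0
  · have hone : whm 0 = fun _ => 1 := by
      ext x
      by_cases hx : x = 0 <;> simp [whm, hx]
    rw [hone]
    exact continuousWithinAt_const
  · have hdiv : whm t = fun x => x / ((1 - t) * x + t) := by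
      ext x
      rw [whm, if_neg fun h => ht0.ne' h.1]
    rw [hdiv]
    exact (continuousAt_id.div (by fun_prop) (by simpa using ht0.ne')).continuousWithinAt

lemma continuousWithinAt_integral_whm_zero (ν : Measure (Set.Icc (0 : ℝ) 1)) [IsFiniteMeasure ν] :
    ContinuousWithinAt (fun x => ∫ t : Set.Icc (0 : ℝ) 1, whm t x ∂ν) (Set.Ici 0) 0 := by
  refine continuousWithinAt_of_dominated (bound := fun _ => 1) ?_ ?_ (integrable_const 1) ?_
  · filter_upwards [self_mem_nhdsWithin] with x hx using (integrable_whm ν hx).aestronglyMeasurable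
  · filter_upwards [self_mem_nhdsWithin, nhdsWithin_le_nhds (Iic_mem_nhds one_pos)] with x hx hx1
    refine .of_forall fun t => ?_
    rw [Real.norm_of_nonneg (whm_nonneg t.2 hx)]
    exact (whm_le_max t.2 hx).trans_eq (max_eq_left hx1)
  · exact .of_forall fun t => continuousWithinAt_whm_zero t.2

end WeightedHarmonicMean

section PartialFractions

open Polynomial

variable {ι K : Type*} [Fintype ι] [DecidableEq ι] [Field K]

lemma sum_eval_div_prod_erase_mul_sub {v : ι → K} (hv : Function.Injective v) {P : K[X]}
    (hP : P.degree < Fintype.card ι) {x : K} (hx : ∀ i, x ≠ v i) :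
    ∑ i, P.eval (v i) / ((∏ l ∈ Finset.univ.erase i, (v i - v l)) * (x - v i)) =
      P.eval x / ∏ i, (x - v i) := by
  have heval := Lagrange.eval_interpolate_not_at_node (s := Finset.univ) (v := v)
    (fun i => P.eval (v i)) fun i _ => hx i
  rw [← Lagrange.eq_interpolate hv.injOn (by rwa [Finset.card_univ]), Lagrange.eval_nodal] at heval
  rw [heval, mul_div_cancel_left₀ _ (Finset.prod_ne_zero_iff.2 fun i _ => sub_ne_zero.2 (hx i))]
  refine Finset.sum_congr rfl fun i _ => ?_
  rw [Lagrange.nodalWeight, Finset.prod_inv_distrib, ← mul_inv, div_eq_inv_mul]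

/-- The residue at `a i` of the rational function `∏ k, (x - b k) / ∏ l, (x - a l)`. These are the
squared weights of the orthogonal Cauchy matrix with nodes `a` and `b`. -/
noncomputable def nodalResidue (a b : ι → K) (i : ι) : K :=
  (∏ k, (a i - b k)) / ∏ l ∈ Finset.univ.erase i, (a i - a l)

variable {a b : ι → K}

lemma nodalResidue_eq_sub_mul (a b : ι → K) (i k : ι) :
    nodalResidue a b i = (a i - b k) *
      ((∏ l ∈ Finset.univ.erase k, (a i - b l)) / ∏ l ∈ Finset.univ.erase i, (a i - a l)) := by
  rw [nodalResidue, ← Finset.mul_prod_erase _ _ (Finset.mem_univ k), mul_div_assoc]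

lemma sum_nodalResidue_div_sub (hb : Function.Injective b) (hab : ∀ i j, a i ≠ b j) (i : ι) :
    ∑ j, nodalResidue b a j / (b j - a i) = 1 := by
  let P : K[X] := Lagrange.nodal Finset.univ a - Lagrange.nodal Finset.univ b
  have hP : P.degree < Fintype.card ι := by
    refine (degree_sub_lt_left (by simp [Lagrange.degree_nodal]) Lagrange.nodal_ne_zero
      (by rw [Lagrange.nodal_monic.leadingCoeff, Lagrange.nodal_monic.leadingCoeff])).trans_eq ?_
    rw [Lagrange.degree_nodal, Finset.card_univ]
  have hPb (j : ι) : P.eval (b j) = ∏ k, (b j - a k) := by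
    rw [eval_sub, Lagrange.eval_nodal_at_node (Finset.mem_univ j), sub_zero, Lagrange.eval_nodal]
  have hPa : P.eval (a i) = -∏ k, (a i - b k) := by
    rw [eval_sub, Lagrange.eval_nodal_at_node (Finset.mem_univ i), zero_sub, Lagrange.eval_nodal]
  have hsum := sum_eval_div_prod_erase_mul_sub hb hP (hab i)
  rw [hPa, neg_div, div_self (Finset.prod_ne_zero_iff.2 fun k _ => sub_ne_zero.2 (hab i k))] at hsum
  rw [← neg_inj, ← hsum, ← Finset.sum_neg_distrib]
  refine Finset.sum_congr rfl fun j _ => ?_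
  rw [hPb, nodalResidue, div_div, ← neg_sub (b j), mul_neg, div_neg]

lemma sum_nodalResidue_div_sub_mul_sub (hb : Function.Injective b) (hab : ∀ i j, a i ≠ b j)
    (i k : ι) :
    ∑ j, nodalResidue b a j / ((b j - a i) * (b j - a k)) =
      if i = k then -(nodalResidue a b i)⁻¹ else 0 := by
  let P : K[X] := Lagrange.nodal (Finset.univ.erase i) a
  have hP : P.degree < Fintype.card ι := by
    rw [Lagrange.degree_nodal]
    exact_mod_cast Finset.card_erase_lt_of_mem (Finset.mem_univ i)
  have hsum : ∑ j, nodalResidue b a j / ((b j - a i) * (b j - a k)) =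
      -(P.eval (a k) / ∏ l, (a k - b l)) := by
    rw [← sum_eval_div_prod_erase_mul_sub hb hP (hab k), ← Finset.sum_neg_distrib]
    refine Finset.sum_congr rfl fun j _ => ?_
    rw [nodalResidue_eq_sub_mul b a j i, mul_div_mul_left _ _ (sub_ne_zero.2 (hab i j).symm),
      Lagrange.eval_nodal, div_div, ← neg_sub (b j), mul_neg, div_neg, neg_neg]
  rw [hsum]
  split_ifs with hik
  · rw [← hik, Lagrange.eval_nodal, nodalResidue, inv_div]
  · rw [Lagrange.eval_nodal_at_node (Finset.mem_erase.2 ⟨Ne.symm hik, Finset.mem_univ k⟩),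
      zero_div, neg_zero]

end PartialFractions

section Interlacing

variable {ι : Type*} [LinearOrder ι] {a b : ι → ℝ}

/-- The families `a` and `b` interlace: `a 0 < b 0 < a 1 < b 1 < ⋯`. -/
def Interlacing (a b : ι → ℝ) : Prop :=
  (∀ i, a i < b i) ∧ ∀ i j, i < j → b i < a j

namespace Interlacing

lemma strictMono_left (h : Interlacing a b) : StrictMono a := fun i j hij =>
  (h.1 i).trans (h.2 i j hij)

lemma strictMono_right (h : Interlacing a b) : StrictMono b := fun i j hij =>
  (h.2 i j hij).trans (h.1 j)

lemma ne (h : Interlacing a b) (i j : ι) : a i ≠ b j := by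
  rcases le_or_gt i j with hij | hij
  · exact ((h.strictMono_left.monotone hij).trans_lt (h.1 j)).ne
  · exact (h.2 j i hij).ne'

variable [Fintype ι]

lemma nodalResidue_neg (h : Interlacing a b) (i : ι) : nodalResidue a b i < 0 := by
  rw [nodalResidue_eq_sub_mul a b i i, ← Finset.prod_div_distrib]
  refine mul_neg_of_neg_of_pos (sub_neg.2 (h.1 i)) (Finset.prod_pos fun l hl => ?_)
  rcases (Finset.ne_of_mem_erase hl).lt_or_gt with hli | hil
  · exact div_pos (sub_pos.2 (h.2 l i hli)) (sub_pos.2 (h.strictMono_left hli))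
  · exact div_pos_of_neg_of_neg (sub_neg.2 ((h.strictMono_left hil).trans (h.1 l)))
      (sub_neg.2 (h.strictMono_left hil))

lemma nodalResidue_pos (h : Interlacing a b) (j : ι) : 0 < nodalResidue b a j := by
  rw [nodalResidue_eq_sub_mul b a j j, ← Finset.prod_div_distrib]
  refine mul_pos (sub_pos.2 (h.1 j)) (Finset.prod_pos fun l hl => ?_)
  rcases (Finset.ne_of_mem_erase hl).lt_or_gt with hlj | hjl
  · exact div_pos (sub_pos.2 ((h.1 l).trans (h.strictMono_right hlj)))
      (sub_pos.2 (h.strictMono_right hlj))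
  · exact div_pos_of_neg_of_neg (sub_neg.2 (h.2 j l hjl)) (sub_neg.2 (h.strictMono_right hjl))

end Interlacing

/-- The Cauchy matrix with entries `1 / (b j - a i)`, its rows and columns rescaled so that it
becomes orthogonal when `a` and `b` interlace. -/
noncomputable def orthogonalCauchyMatrix [Fintype ι] (a b : ι → ℝ) : Matrix ι ι ℝ :=
  .of fun i j => √(-nodalResidue a b i) * √(nodalResidue b a j) / (b j - a i)

namespace Interlacing

open Matrix

variable [Fintype ι]

lemma orthogonalCauchyMatrix_mul_transpose (h : Interlacing a b) :
    orthogonalCauchyMatrix a b * (orthogonalCauchyMatrix a b)ᵀ = 1 := by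
  ext i k
  have hsum : (orthogonalCauchyMatrix a b * (orthogonalCauchyMatrix a b)ᵀ) i k =
      √(-nodalResidue a b i) * √(-nodalResidue a b k) *
        ∑ j, nodalResidue b a j / ((b j - a i) * (b j - a k)) := by
    rw [mul_apply, Finset.mul_sum]
    refine Finset.sum_congr rfl fun j _ => ?_
    simp only [orthogonalCauchyMatrix, of_apply, transpose_apply]
    rw [div_mul_div_comm, mul_mul_mul_comm, Real.mul_self_sqrt (h.nodalResidue_pos j).le,
      mul_div_assoc]
  rw [hsum, sum_nodalResidue_div_sub_mul_sub h.strictMono_right.injective h.ne, one_apply]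
  split_ifs with hik
  · rw [← hik, Real.mul_self_sqrt (neg_pos.2 (h.nodalResidue_neg i)).le, neg_mul_neg,
      mul_inv_cancel₀ (h.nodalResidue_neg i).ne]
  · rw [mul_zero]

lemma orthogonalCauchyMatrix_conj_diagonal (h : Interlacing a b) :
    orthogonalCauchyMatrix a b * diagonal b * (orthogonalCauchyMatrix a b)ᵀ =
      diagonal a + vecMulVec (fun i => √(-nodalResidue a b i)) fun i => √(-nodalResidue a b i) := by
  set O := orthogonalCauchyMatrix a b
  set w := fun i => √(-nodalResidue a b i)
  set z := fun j => √(nodalResidue b a j)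
  have hcomm : O * diagonal b = diagonal a * O + vecMulVec w z := by
    ext i j
    have := sub_ne_zero.2 (h.ne i j).symm
    rw [mul_diagonal, Matrix.add_apply, diagonal_mul, vecMulVec_apply]
    simp only [O, orthogonalCauchyMatrix, of_apply, w, z]
    field_simp
    ring
  have hOz : O *ᵥ z = w := by
    ext i
    calc (O *ᵥ z) i = w i * ∑ j, nodalResidue b a j / (b j - a i) := by
          rw [mulVec, dotProduct, Finset.mul_sum]
          refine Finset.sum_congr rfl fun j _ => ?_
          rw [← Real.mul_self_sqrt (h.nodalResidue_pos j).le]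
          simp only [O, orthogonalCauchyMatrix, of_apply, w, z]
          ring
      _ = w i := by rw [sum_nodalResidue_div_sub h.strictMono_right.injective h.ne, mul_one]
  rw [hcomm, add_mul, mul_assoc, h.orthogonalCauchyMatrix_mul_transpose, mul_one, vecMulVec_mul,
    vecMul_transpose, hOz]

open Polynomial in
lemma orthogonalCauchyMatrix_transpose_mulVec (h : Interlacing a b) {V : ℝ[X]}
    (hV : V.degree < Fintype.card ι) (j : ι) :
    ((orthogonalCauchyMatrix a b)ᵀ *ᵥ fun i => V.eval (a i) /
        (√(-nodalResidue a b i) * ∏ l ∈ Finset.univ.erase i, (a i - a l))) j =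
      √(nodalResidue b a j) * (V.eval (b j) / ∏ k, (b j - a k)) := by
  rw [← sum_eval_div_prod_erase_mul_sub h.strictMono_left.injective hV fun i => (h.ne i j).symm,
    Finset.mul_sum, mulVec, dotProduct]
  refine Finset.sum_congr rfl fun i _ => ?_
  have := (Real.sqrt_pos.2 (neg_pos.2 (h.nodalResidue_neg i))).ne'
  simp only [orthogonalCauchyMatrix, transpose_apply, of_apply]
  field_simp

end Interlacing

end Interlacing

namespace OperatorMonotone

open Matrix

variable {f : ℝ → ℝ} {m : ℕ}

lemma sum_mul_norm_sq_le_sum (hf : OperatorMonotone f) {U : Matrix (Fin m) (Fin m) ℂ}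
    (hU : U ∈ unitary (Matrix (Fin m) (Fin m) ℂ)) {a b : Fin m → ℝ} (ha : ∀ i, 0 ≤ a i)
    (hb : ∀ i, 0 ≤ b i)
    (hab : (U * diagonal (fun i => (b i : ℂ)) * Uᴴ - diagonal fun i => (a i : ℂ)).PosSemidef)
    (x : Fin m → ℂ) :
    ∑ i, f (a i) * ‖x i‖ ^ 2 ≤ ∑ j, f (b j) * ‖(Uᴴ *ᵥ x) j‖ ^ 2 := by
  have hpsd {d : Fin m → ℝ} (hd : ∀ i, 0 ≤ d i) :
      (diagonal fun i => (d i : ℂ)).PosSemidef :=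
    .diagonal fun i => Complex.zero_le_real.2 (hd i)
  have hle := (hf m _ _ (hpsd ha) ((hpsd hb).mul_mul_conjTranspose_same U) hab)
    |>.dotProduct_mulVec_nonneg x
  have hdiag := cfc_mul_diagonal_mul_star (one_mem (unitary (Matrix (Fin m) (Fin m) ℂ))) f a
  have hform := dotProduct_mul_diagonal_mul_conjTranspose_mulVec 1 (fun i => f (a i)) x
  simp only [conjTranspose_one, one_mul, mul_one, one_mulVec] at hdiag hform
  rw [cfc_mul_diagonal_mul_star hU, hdiag, sub_mulVec, dotProduct_sub, hform,
    dotProduct_mul_diagonal_mul_conjTranspose_mulVec U fun j => f (b j), ← Complex.ofReal_sub,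
    Complex.zero_le_real] at hle
  exact sub_nonneg.1 hle

lemma sum_mul_sq_le_sum (hf : OperatorMonotone f) {O : Matrix (Fin m) (Fin m) ℝ}
    (hO : O * Oᵀ = 1) {a b w : Fin m → ℝ} (ha : ∀ i, 0 ≤ a i) (hb : ∀ i, 0 ≤ b i)
    (hab : O * diagonal b * Oᵀ = diagonal a + vecMulVec w w) (x : Fin m → ℝ) :
    ∑ i, f (a i) * x i ^ 2 ≤ ∑ j, f (b j) * (Oᵀ *ᵥ x) j ^ 2 := by
  let φ : Matrix (Fin m) (Fin m) ℝ →+* Matrix (Fin m) (Fin m) ℂ := Complex.ofRealHom.mapMatrix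
  have hφT : (φ O)ᴴ = φ Oᵀ := by
    ext i j
    simp [φ]
  have hφdiag (d : Fin m → ℝ) : (diagonal fun i => (d i : ℂ)) = φ (diagonal d) := by
    simp [φ, diagonal_map]
  have hφw : φ (vecMulVec w w) = vecMulVec (fun i => (w i : ℂ)) (star fun i => (w i : ℂ)) := by
    ext i j
    simp [φ, vecMulVec_apply]
  have hφO : φ O ∈ unitary (Matrix (Fin m) (Fin m) ℂ) := by
    rw [← unitaryGroup, mem_unitaryGroup_iff, star_eq_conjTranspose, hφT, ← map_mul, hO, map_one]
  have hrank : (φ O * diagonal (fun i => (b i : ℂ)) * (φ O)ᴴ - diagonal fun i => (a i : ℂ))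
      = vecMulVec (fun i => (w i : ℂ)) (star fun i => (w i : ℂ)) := by
    rw [hφT, hφdiag, hφdiag, ← map_mul, ← map_mul, hab, map_add, add_sub_cancel_left, hφw]
  have hφx (j : Fin m) : ((φ O)ᴴ *ᵥ fun i => (x i : ℂ)) j = ((Oᵀ *ᵥ x) j : ℂ) := by
    simp [φ, mulVec, dotProduct]
  simpa only [hφx, Complex.norm_real, Real.norm_eq_abs, sq_abs] using
    hf.sum_mul_norm_sq_le_sum hφO ha hb (hrank ▸ posSemidef_vecMulVec_self_star _)
      fun i => (x i : ℂ)

open Polynomial in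
lemma sum_interlacing_nonneg (hf : OperatorMonotone f) {a b : Fin m → ℝ}
    (hab : Interlacing a b) (ha : ∀ i, 0 ≤ a i) {V : ℝ[X]} (hV : V.degree < m) :
    0 ≤ ∑ i, f (a i) * V.eval (a i) ^ 2 /
          ((∏ k, (a i - b k)) * ∏ l ∈ Finset.univ.erase i, (a i - a l)) +
        ∑ j, f (b j) * V.eval (b j) ^ 2 /
          ((∏ k, (b j - a k)) * ∏ l ∈ Finset.univ.erase j, (b j - b l)) := by
  have hle := hf.sum_mul_sq_le_sum hab.orthogonalCauchyMatrix_mul_transpose ha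
    (fun i => (ha i).trans (hab.1 i).le) hab.orthogonalCauchyMatrix_conj_diagonal fun i =>
      V.eval (a i) / (√(-nodalResidue a b i) * ∏ l ∈ Finset.univ.erase i, (a i - a l))
  simp only [hab.orthogonalCauchyMatrix_transpose_mulVec (V := V) (by simpa using hV), mul_pow,
    div_pow, Real.sq_sqrt (hab.nodalResidue_pos _).le,
    Real.sq_sqrt (neg_pos.2 (hab.nodalResidue_neg _)).le] at hle
  have hsum_a : ∑ i, f (a i) * V.eval (a i) ^ 2 /
        ((∏ k, (a i - b k)) * ∏ l ∈ Finset.univ.erase i, (a i - a l)) =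
      -∑ i, f (a i) * (V.eval (a i) ^ 2 /
        (-nodalResidue a b i * (∏ l ∈ Finset.univ.erase i, (a i - a l)) ^ 2)) := by
    rw [← Finset.sum_neg_distrib]
    refine Finset.sum_congr rfl fun i _ => ?_
    have := (hab.nodalResidue_neg i).ne
    simp only [nodalResidue, ne_eq, div_eq_zero_iff, not_or] at this ⊢
    obtain ⟨hb0, ha0⟩ := this
    field_simp
  have hsum_b : ∑ j, f (b j) * V.eval (b j) ^ 2 /
        ((∏ k, (b j - a k)) * ∏ l ∈ Finset.univ.erase j, (b j - b l)) =
      ∑ j, f (b j) * (nodalResidue b a j * (V.eval (b j) ^ 2 / (∏ k, (b j - a k)) ^ 2)) := by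
    refine Finset.sum_congr rfl fun j _ => ?_
    have := (hab.nodalResidue_pos j).ne'
    simp only [nodalResidue, ne_eq, div_eq_zero_iff, not_or] at this ⊢
    obtain ⟨hb0, ha0⟩ := this
    field_simp
  rw [hsum_a, hsum_b]
  linarith

end OperatorMonotone

section DividedDifference

/-- The divided difference `[S; g]` of `g` at the set `S` of nodes, i.e. the leading coefficient of
the polynomial that interpolates `g` on `S`. -/
noncomputable def dividedDifference {K : Type*} [Field K] [DecidableEq K] (S : Finset K)
    (g : K → K) : K :=
  ∑ y ∈ S, g y / ∏ z ∈ S.erase y, (y - z)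

variable {K : Type*} [Field K] [DecidableEq K]

lemma dividedDifference_union {S T : Finset K} (hST : Disjoint S T) (g : K → K) :
    dividedDifference (S ∪ T) g = dividedDifference S (fun y => g y / ∏ z ∈ T, (y - z)) +
      dividedDifference T (fun y => g y / ∏ z ∈ S, (y - z)) := by
  have hterm {S T : Finset K} (hST : Disjoint S T) {y : K} (hy : y ∈ S) :
      g y / ∏ z ∈ (S ∪ T).erase y, (y - z) =
        g y / (∏ z ∈ T, (y - z)) / ∏ z ∈ S.erase y, (y - z) := by
    have hyT : y ∉ T := Finset.disjoint_left.1 hST hy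
    rw [Finset.erase_union_distrib, Finset.erase_eq_of_notMem hyT, Finset.prod_union
      (Finset.disjoint_of_subset_left (Finset.erase_subset _ _) hST), mul_comm, div_div]
  rw [dividedDifference, Finset.sum_union hST]
  refine congrArg₂ _ (Finset.sum_congr rfl fun y hy => hterm hST hy)
    (Finset.sum_congr rfl fun y hy => ?_)
  rw [Finset.union_comm, hterm hST.symm hy]

lemma dividedDifference_singleton (r : K) (g : K → K) : dividedDifference {r} g = g r := by
  simp [dividedDifference]

lemma dividedDifference_insert {S : Finset K} {r : K} (hr : r ∉ S) (g : K → K) :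
    dividedDifference (insert r S) g =
      g r / ∏ z ∈ S, (r - z) + dividedDifference S fun y => g y / (y - r) := by
  rw [Finset.insert_eq, dividedDifference_union (Finset.disjoint_singleton_left.2 hr),
    dividedDifference_singleton]
  simp only [Finset.prod_singleton]

lemma dividedDifference_image {ι : Type*} [Fintype ι] [DecidableEq ι] {v : ι → K}
    (hv : Function.Injective v) (g : K → K) :
    dividedDifference (Finset.univ.image v) g =
      ∑ i, g (v i) / ∏ l ∈ Finset.univ.erase i, (v i - v l) := by
  rw [dividedDifference, Finset.sum_image hv.injOn]
  refine Finset.sum_congr rfl fun i _ => ?_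
  rw [← Finset.image_erase hv, Finset.prod_image hv.injOn]

open Filter Topology in
lemma tendsto_dividedDifference_mul_div_sub (S : Finset ℝ) (g : ℝ → ℝ) :
    Tendsto (fun R => dividedDifference S fun y => g y * (R / (R - y))) atTop
      (𝓝 (dividedDifference S g)) := by
  refine tendsto_finsetSum _ fun y _ => ?_
  have hratio : Tendsto (fun R : ℝ => R / (R - y)) atTop (𝓝 1) := by
    have hdeg := Polynomial.div_tendsto_atTop_leadingCoeff_div_of_degree_eq Polynomial.X
      (Polynomial.X - Polynomial.C y) (by simp)
    simpa using hdeg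
  simpa using (hratio.const_mul (g y)).div_const _

end DividedDifference

lemma exists_interlacing_of_card_eq {S : Finset ℝ} {m : ℕ} (hS : S.card = 2 * m) :
    ∃ a b : Fin m → ℝ, Interlacing a b ∧ S = Finset.univ.image a ∪ Finset.univ.image b := by
  let e := S.orderEmbOfFin hS
  refine ⟨fun i => e ⟨2 * i, by omega⟩, fun i => e ⟨2 * i + 1, by omega⟩,
    ⟨fun i => e.strictMono (by simp [Fin.lt_def]),
      fun i j hij => e.strictMono (by simp only [Fin.lt_def] at hij ⊢; omega)⟩, ?_⟩
  ext y
  simp only [Finset.mem_union, Finset.mem_image, Finset.mem_univ, true_and]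
  constructor
  · intro hy
    obtain ⟨k, rfl⟩ : y ∈ Set.range e := by rwa [S.range_orderEmbOfFin hS]
    rcases Nat.even_or_odd' k with ⟨r, hr | hr⟩
    · exact .inl ⟨⟨r, by omega⟩, congrArg e (Fin.ext hr.symm)⟩
    · exact .inr ⟨⟨r, by omega⟩, congrArg e (Fin.ext hr.symm)⟩
  · rintro (⟨i, rfl⟩ | ⟨i, rfl⟩) <;> exact S.orderEmbOfFin_mem hS _

namespace OperatorMonotone

open Polynomial

variable {f : ℝ → ℝ}

lemma dividedDifference_mul_sq_nonneg (hf : OperatorMonotone f) {S : Finset ℝ} {m : ℕ}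
    (hcard : S.card = 2 * m) (hS : ∀ y ∈ S, 0 ≤ y) {V : ℝ[X]} (hV : V.degree < m) :
    0 ≤ dividedDifference S fun y => f y * V.eval y ^ 2 := by
  obtain ⟨a, b, hab, rfl⟩ := exists_interlacing_of_card_eq hcard
  have hdisj : Disjoint (Finset.univ.image a) (Finset.univ.image b) := by
    simp only [Finset.disjoint_left, Finset.mem_image, Finset.mem_univ, true_and]
    rintro _ ⟨i, rfl⟩ ⟨j, hj⟩
    exact hab.ne i j hj.symm
  have ha (i) : 0 ≤ a i :=
    hS _ (Finset.mem_union_left _ (Finset.mem_image_of_mem a (Finset.mem_univ i)))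
  have hainj := hab.strictMono_left.injective
  have hbinj := hab.strictMono_right.injective
  rw [dividedDifference_union hdisj, dividedDifference_image hainj, dividedDifference_image hbinj]
  simp only [Finset.prod_image hainj.injOn, Finset.prod_image hbinj.injOn, div_div]
  exact hf.sum_interlacing_nonneg hab ha hV

lemma le_two_mul_sub_one_mul (hf : OperatorMonotone f) (h0 : 0 ≤ f 0) {R : ℝ} (hR : 1 < R) :
    f R ≤ (2 * R - 1) * f 1 := by
  have hR0 : 0 < R := one_pos.trans hR
  have hR1 : 0 < R - 1 := sub_pos.2 hR
  have h10 : (1 : ℝ) ∉ ({0} : Finset ℝ) := by simp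
  have hR10 : R ∉ ({1, 0} : Finset ℝ) := by simp [hR.ne', hR0.ne']
  have h2R : 2 * R ∉ ({R, 1, 0} : Finset ℝ) := by
    simp only [Finset.mem_insert, Finset.mem_singleton, not_or]
    exact ⟨by linarith, by linarith, by linarith⟩
  have hnonneg := hf.dividedDifference_mul_sq_nonneg (S := {2 * R, R, 1, 0}) (m := 2)
    (by simp only [Finset.card_insert_of_notMem, h2R, hR10, h10, not_false_eq_true,
      Finset.card_singleton])
    (by simp [hR0.le]) (V := X - C (2 * R)) (by rw [degree_X_sub_C]; norm_num)
  have hvalue : dividedDifference {2 * R, R, 1, 0} (fun y => f y * (X - C (2 * R)).eval y ^ 2) =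
      ((2 * R - 1) * f 1 - f R) / (R - 1) - 2 * f 0 := by
    have h1R : 1 - R ≠ 0 := by linarith
    rw [dividedDifference_insert h2R, dividedDifference_insert hR10,
      dividedDifference_insert h10, dividedDifference_singleton]
    simp only [eval_sub, eval_X, eval_C, sub_self, Finset.prod_insert h10, Finset.prod_singleton]
    have hRR : R - 2 * R = -R := by ring
    rw [hRR, zero_sub, zero_sub, zero_sub, sub_zero]
    field_simp
    ring
  rw [hvalue] at hnonneg
  have hdiv : 0 ≤ ((2 * R - 1) * f 1 - f R) / (R - 1) := by linarith
  rw [le_div_iff₀ hR1] at hdiv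
  linarith

lemma mul_sq_eval_div_prod_sub_le (hf : OperatorMonotone f) (h0 : 0 ≤ f 0) {S : Finset ℝ} {R : ℝ}
    (hR : 1 < R) (hSR : ∀ y ∈ S, y < R) (U : ℝ[X]) :
    f R * (U.eval R ^ 2 / ∏ z ∈ S, (R - z)) ≤
      f 1 * (((2 * X - 1) * U ^ 2).eval R / (Lagrange.nodal S id).eval R) := by
  have hprodR : 0 < ∏ z ∈ S, (R - z) := Finset.prod_pos fun z hz => sub_pos.2 (hSR z hz)
  calc f R * (U.eval R ^ 2 / ∏ z ∈ S, (R - z))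
      ≤ (2 * R - 1) * f 1 * (U.eval R ^ 2 / ∏ z ∈ S, (R - z)) := by
        gcongr
        exact hf.le_two_mul_sub_one_mul h0 hR
    _ = _ := by
        have heval : ((2 * X - 1) * U ^ 2 : ℝ[X]).eval R = (2 * R - 1) * U.eval R ^ 2 := by simp
        rw [heval, Lagrange.eval_nodal]
        simp only [id]
        ring

lemma dividedDifference_mul_sq_div_le (hf : OperatorMonotone f) (h0 : 0 ≤ f 0) {S : Finset ℝ}
    {m : ℕ} (hcard : S.card = 2 * m) (hS : ∀ y ∈ S, 0 < y) {U : ℝ[X]} (hU : U.degree < m) {R : ℝ}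
    (hR : 1 < R) (hSR : ∀ y ∈ S, y < R) :
    (dividedDifference S fun y => f y * U.eval y ^ 2 / y * (R / (R - y))) ≤
      f 1 * (((2 * X - 1) * U ^ 2).eval R / (Lagrange.nodal S id).eval R) := by
  have hR0 : 0 < R := one_pos.trans hR
  have h0S : 0 ∉ S := fun h => (hS 0 h).false
  have hRS : R ∉ insert 0 S := by
    rw [Finset.mem_insert, not_or]
    exact ⟨hR0.ne', fun h => (hSR R h).false⟩
  have hprod0 : 0 < ∏ z ∈ S, (0 - z) := by
    simp only [zero_sub]
    rw [Finset.prod_neg, hcard, pow_mul, neg_one_sq, one_pow, one_mul]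
    exact Finset.prod_pos hS
  have hnonneg := hf.dividedDifference_mul_sq_nonneg (S := insert R (insert 0 S)) (m := m + 1)
    (by rw [Finset.card_insert_of_notMem hRS, Finset.card_insert_of_notMem h0S, hcard]; ring)
    (by simpa [hR0.le] using fun y hy => (hS y hy).le)
    (hU.trans (by exact_mod_cast m.lt_succ_self))
  rw [dividedDifference_insert hRS, dividedDifference_insert h0S, Finset.prod_insert h0S] at hnonneg
  have hnode_zero : f 0 * U.eval 0 ^ 2 / (0 - R) / ∏ z ∈ S, (0 - z) ≤ 0 :=
    div_nonpos_of_nonpos_of_nonneg (div_nonpos_of_nonneg_of_nonpos (by positivity) (by linarith))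
      hprod0.le
  have hnode_R : R * (f R * U.eval R ^ 2 / ((R - 0) * ∏ z ∈ S, (R - z))) ≤
      f 1 * (((2 * X - 1) * U ^ 2).eval R / (Lagrange.nodal S id).eval R) := by
    refine Eq.trans_le ?_ (hf.mul_sq_eval_div_prod_sub_le h0 hR hSR U)
    rw [sub_zero]
    field_simp
  have hnodes_S : R * dividedDifference S (fun y => f y * U.eval y ^ 2 / (y - R) / (y - 0)) =
      -dividedDifference S fun y => f y * U.eval y ^ 2 / y * (R / (R - y)) := by
    rw [dividedDifference, Finset.mul_sum, dividedDifference, ← Finset.sum_neg_distrib]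
    refine Finset.sum_congr rfl fun y _ => ?_
    rw [← neg_sub R y, sub_zero, div_neg]
    ring
  have hscaled := mul_nonneg hR0.le hnonneg
  rw [mul_add, mul_add, hnodes_S] at hscaled
  linarith [mul_nonpos_of_nonneg_of_nonpos hR0.le hnode_zero]

open Filter Topology in
lemma dividedDifference_mul_sq_div_nonpos (hf : OperatorMonotone f) (h0 : 0 ≤ f 0) {S : Finset ℝ}
    {m : ℕ} (hcard : S.card = 2 * m) (hS : ∀ y ∈ S, 0 < y) {U : ℝ[X]} (hU : U.degree < m) :
    (dividedDifference S fun y => f y * U.eval y ^ 2 / y) ≤ 0 := by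
  have hdeg : ((2 * X - 1) * U ^ 2).degree < (Lagrange.nodal S id).degree := by
    rw [Lagrange.degree_nodal, hcard]
    have hlin : (2 * X - 1 : ℝ[X]).degree ≤ 1 := by compute_degree
    rcases eq_or_ne U 0 with rfl | hU0
    · rw [zero_pow two_ne_zero, mul_zero, degree_zero]
      exact WithBot.bot_lt_coe (2 * m)
    have hUm : U.natDegree < m := (natDegree_lt_iff_degree_lt hU0).2 hU
    calc ((2 * X - 1) * U ^ 2).degree ≤ 1 + 2 • (U.natDegree : WithBot ℕ) := by
          refine (degree_mul_le _ _).trans (add_le_add hlin ?_)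
          rw [degree_pow, degree_eq_natDegree hU0]
      _ < (2 * m : ℕ) := by
          rw [nsmul_eq_mul]
          exact_mod_cast (by omega : 1 + 2 * U.natDegree < 2 * m)
  have hbound : Tendsto
      (fun R => f 1 * (((2 * X - 1) * U ^ 2).eval R / (Lagrange.nodal S id).eval R))
      atTop (𝓝 0) := by
    simpa using (div_tendsto_atTop_zero_of_degree_lt _ _ hdeg).const_mul (f 1)
  refine le_of_tendsto_of_tendsto (tendsto_dividedDifference_mul_div_sub S _) hbound ?_
  filter_upwards [eventually_gt_atTop 1,
    (eventually_all_finset S).2 fun y _ => eventually_gt_atTop y] with R hR hSR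
  exact hf.dividedDifference_mul_sq_div_le h0 hcard hS hU hR hSR

end OperatorMonotone

section PolynomialsNonnegOnHalfLine

open Polynomial

lemma exists_isMinOn_Ici_eval {P : ℝ[X]} (hP : ∀ x, 0 ≤ x → 0 ≤ P.eval x) :
    ∃ a ∈ Set.Ici 0, IsMinOn P.eval (Set.Ici 0) a := by
  rcases le_or_gt P.degree 0 with hdeg | hdeg
  · rw [eq_C_of_degree_le_zero hdeg]
    exact ⟨0, Set.self_mem_Ici, fun x _ => by simp⟩
  · refine P.continuous.continuousOn.exists_isMinOn' isClosed_Ici Set.self_mem_Ici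
      (Filter.eventually_inf_principal.2 ?_)
    have hlarge := (P.tendsto_norm_atTop hdeg (tendsto_norm_cocompact_atTop (E := ℝ))).eventually
      (Filter.eventually_ge_atTop (P.eval 0))
    filter_upwards [hlarge] with x hx hx0
    rwa [Real.norm_of_nonneg (hP x hx0)] at hx

lemma sq_X_sub_C_dvd_of_nonneg {P : ℝ[X]} (hP : ∀ x, 0 ≤ x → 0 ≤ P.eval x) {a : ℝ} (ha : 0 < a)
    (hroot : P.IsRoot a) : (X - C a) ^ 2 ∣ P := by
  rcases eq_or_ne P 0 with rfl | hP0
  · exact dvd_zero _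
  have hmin : IsLocalMin P.eval a := by
    filter_upwards [Ioi_mem_nhds ha] with x hx
    rw [hroot.eq_zero]
    exact hP x (le_of_lt hx)
  rw [← le_rootMultiplicity_iff hP0]
  exact one_lt_rootMultiplicity_iff_isRoot hP0 |>.2
    ⟨hroot, by rw [IsRoot, ← Polynomial.deriv]; exact hmin.deriv_eq_zero⟩

lemma nonneg_of_mul_eval_nonneg {P Q : ℝ[X]} {a : ℝ} (hQ : ∀ x, 0 ≤ x → x ≠ a → 0 < Q.eval x)
    (hQP : ∀ x, 0 ≤ x → 0 ≤ (Q * P).eval x) {x : ℝ} (hx : 0 ≤ x) : 0 ≤ P.eval x := by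
  have hne {y : ℝ} (hy : 0 ≤ y) (hya : y ≠ a) : 0 ≤ P.eval y :=
    nonneg_of_mul_nonneg_right (eval_mul (R := ℝ) ▸ hQP y hy) (hQ y hy hya)
  rcases ne_or_eq x a with hxa | rfl
  · exact hne hx hxa
  · refine ge_of_tendsto (P.continuousWithinAt (s := Set.Ioi x)).tendsto ?_
    filter_upwards [self_mem_nhdsWithin] with y hy
    exact hne (hx.trans (le_of_lt hy)) (ne_of_gt hy)

/-- A linear functional on polynomials that is nonnegative on the generators `U ^ 2` and
`X * V ^ 2` of degree at most `n` of the cone of polynomials that are nonnegative on `[0, ∞)`; this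
is the positivity condition of the truncated Stieltjes moment problem. -/
structure StieltjesPositive (n : ℕ) (L : ℝ[X] →ₗ[ℝ] ℝ) : Prop where
  map_sq_nonneg : ∀ U : ℝ[X], (U ^ 2).natDegree ≤ n → 0 ≤ L (U ^ 2)
  map_X_mul_sq_nonneg : ∀ V : ℝ[X], (X * V ^ 2).natDegree ≤ n → 0 ≤ L (X * V ^ 2)

namespace StieltjesPositive

variable {n : ℕ} {L : ℝ[X] →ₗ[ℝ] ℝ}

lemma map_C_nonneg (hL : StieltjesPositive n L) {c : ℝ} (hc : 0 ≤ c) : 0 ≤ L (C c) := by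
  have hsq : C c = C √c ^ 2 := by rw [← C_pow, Real.sq_sqrt hc]
  rw [hsq]
  exact hL.map_sq_nonneg _ (by rw [← hsq, natDegree_C]; exact n.zero_le)

lemma comp_mulLeft_X (hL : StieltjesPositive (n + 1) L) :
    StieltjesPositive n (L ∘ₗ LinearMap.mulLeft ℝ X) where
  map_sq_nonneg U hU := hL.map_X_mul_sq_nonneg U <|
    natDegree_mul_le_of_le natDegree_X_le hU |>.trans_eq (add_comm _ _)
  map_X_mul_sq_nonneg V hV := by
    have hsq : X * (X * V ^ 2) = (X * V) ^ 2 := by ring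
    rw [LinearMap.comp_apply, LinearMap.mulLeft_apply, hsq]
    refine hL.map_sq_nonneg _ ?_
    rw [← hsq]
    exact natDegree_mul_le_of_le natDegree_X_le hV |>.trans_eq (add_comm _ _)

lemma comp_mulLeft_sq (hL : StieltjesPositive (n + 2) L) {Q : ℝ[X]} (hQ : Q.natDegree ≤ 1) :
    StieltjesPositive n (L ∘ₗ LinearMap.mulLeft ℝ (Q ^ 2)) := by
  have hdeg {P : ℝ[X]} (hP : P.natDegree ≤ n) : (Q ^ 2 * P).natDegree ≤ n + 2 :=
    natDegree_mul_le_of_le (natDegree_pow_le_of_le 2 hQ) hP |>.trans_eq (add_comm _ _)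
  constructor
  · intro U hU
    have hsq : Q ^ 2 * U ^ 2 = (Q * U) ^ 2 := by ring
    rw [LinearMap.comp_apply, LinearMap.mulLeft_apply, hsq]
    exact hL.map_sq_nonneg _ (hsq ▸ hdeg hU)
  · intro V hV
    have hsq : Q ^ 2 * (X * V ^ 2) = X * (Q * V) ^ 2 := by ring
    rw [LinearMap.comp_apply, LinearMap.mulLeft_apply, hsq]
    exact hL.map_X_mul_sq_nonneg _ (hsq ▸ hdeg hV)

-- Subtract from `P` its minimum over `[0, ∞)` and divide by `X` or by `(X - a) ^ 2`, according to
-- whether the minimum is attained at `0` or at some `a > 0`.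
theorem map_nonneg (hL : StieltjesPositive n L) {P : ℝ[X]} (hdeg : P.natDegree ≤ n)
    (hP : ∀ x, 0 ≤ x → 0 ≤ P.eval x) : 0 ≤ L P := by
  induction n using Nat.strong_induction_on generalizing L P with
  | _ n ih =>
  obtain ⟨a, ha, hmin⟩ := exists_isMinOn_Ici_eval hP
  obtain ⟨R, hR⟩ : ∃ R, R = P - C (P.eval a) := ⟨_, rfl⟩
  have hroot : R.IsRoot a := by simp [hR]
  have hRnonneg (x : ℝ) (hx : 0 ≤ x) : 0 ≤ R.eval x := by
    simpa [hR] using hmin hx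
  have hRdeg : R.natDegree ≤ n := by rwa [hR, natDegree_sub_C]
  suffices hLR : 0 ≤ L R by
    rw [← sub_add_cancel P (C (P.eval a)), ← hR, map_add]
    exact add_nonneg hLR (hL.map_C_nonneg (hP a ha))
  rcases eq_or_ne R 0 with hR0 | hR0
  · rw [hR0, map_zero]
  rcases (Set.mem_Ici.1 ha).eq_or_lt with rfl | ha0
  · obtain ⟨q, rfl⟩ : X ∣ R := by rwa [X_dvd_iff, coeff_zero_eq_eval_zero]
    rw [natDegree_X_mul (right_ne_zero_of_mul hR0)] at hRdeg
    obtain ⟨k, rfl⟩ := Nat.exists_eq_add_of_le' (Nat.le_of_add_left_le hRdeg)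
    exact ih k k.lt_succ_self hL.comp_mulLeft_X (Nat.le_of_add_le_add_right hRdeg)
      fun x hx => nonneg_of_mul_eval_nonneg
        (fun y hy hy0 => by simpa using hy.lt_of_ne' hy0) hRnonneg hx
  · obtain ⟨q, rfl⟩ := sq_X_sub_C_dvd_of_nonneg hRnonneg ha0 hroot
    rw [((monic_X_sub_C a).pow 2).natDegree_mul' (right_ne_zero_of_mul hR0), natDegree_pow,
      natDegree_X_sub_C, add_comm] at hRdeg
    obtain ⟨k, rfl⟩ := Nat.exists_eq_add_of_le' (Nat.le_of_add_left_le hRdeg)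
    exact ih k (by omega) (hL.comp_mulLeft_sq (natDegree_X_sub_C_le a))
      (Nat.le_of_add_le_add_right hRdeg) fun x hx => nonneg_of_mul_eval_nonneg
        (fun y _ hya => by simpa using sq_pos_of_ne_zero (sub_ne_zero.2 hya)) hRnonneg hx

end StieltjesPositive

end PolynomialsNonnegOnHalfLine

section HarmonicCombinations

open Polynomial

/-- The numerator, a polynomial in `s`, of the rational function `∑ y ∈ S, c y * (y / (s + y))`.
Up to the factor `1 + s` the latter is `∑ y ∈ S, c y * whm t y` with `t = s / (1 + s)`. -/
noncomputable def harmonicNumerator (S : Finset ℝ) (c : ℝ → ℝ) : ℝ[X] :=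
  ∑ y ∈ S, C (c y * y) * ∏ z ∈ S.erase y, (X + C z)

/-- The linear functional on polynomials that sends `harmonicNumerator S c` to
`∑ y ∈ S, c y * f y`, written as a divided difference; it does so only when `S` has an even number
of nodes, see `harmonicFunctional_harmonicNumerator`. -/
noncomputable def harmonicFunctional (S : Finset ℝ) (f : ℝ → ℝ) : ℝ[X] →ₗ[ℝ] ℝ where
  toFun q := -dividedDifference S fun y => f y * q.eval (-y) / y
  map_add' p q := by
    simp only [dividedDifference, eval_add, mul_add, add_div, Finset.sum_add_distrib, neg_add]
  map_smul' r q := by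
    simp only [dividedDifference, eval_smul, smul_eq_mul, RingHom.id_apply, mul_neg, Finset.mul_sum]
    congr! 2
    ring

variable {S : Finset ℝ} {m : ℕ}

lemma natDegree_harmonicNumerator_le (S : Finset ℝ) (c : ℝ → ℝ) :
    (harmonicNumerator S c).natDegree ≤ S.card - 1 := by
  refine natDegree_sum_le_of_forall_le _ _ fun y hy =>
    (natDegree_C_mul_le _ _).trans ((natDegree_prod_le _ _).trans_eq ?_)
  simp only [natDegree_X_add_C, Finset.sum_const, smul_eq_mul, mul_one, Finset.card_erase_of_mem hy]

lemma eval_neg_harmonicNumerator {y : ℝ} (hy : y ∈ S) (c : ℝ → ℝ) :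
    (harmonicNumerator S c).eval (-y) = c y * y * ∏ z ∈ S.erase y, (z - y) := by
  rw [harmonicNumerator, eval_finsetSum, Finset.sum_eq_single_of_mem y hy]
  · simp only [eval_mul, eval_C, eval_prod, eval_add, eval_X, neg_add_eq_sub]
  · intro w _ hwy
    rw [eval_mul, eval_prod, Finset.prod_eq_zero (Finset.mem_erase.2 ⟨hwy.symm, hy⟩) (by simp),
      mul_zero]

lemma whm_div_one_add {s x : ℝ} (hs : 0 ≤ s) (hx : 0 < x) :
    whm (s / (1 + s)) x = (1 + s) * (x / (s + x)) := by
  rw [whm_of_pos _ hx]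
  have hden : (1 - s / (1 + s)) * x + s / (1 + s) = (s + x) / (1 + s) := by
    field_simp
    ring
  rw [hden]
  field_simp

lemma eval_harmonicNumerator (hS : ∀ y ∈ S, 0 < y) (c : ℝ → ℝ) {s : ℝ} (hs : 0 ≤ s) :
    (harmonicNumerator S c).eval s =
      (∏ z ∈ S, (s + z)) / (1 + s) * ∑ y ∈ S, c y * whm (s / (1 + s)) y := by
  rw [harmonicNumerator, eval_finsetSum, Finset.mul_sum]
  refine Finset.sum_congr rfl fun y hy => ?_
  have hy0 := hS y hy
  rw [whm_div_one_add hs hy0, ← Finset.mul_prod_erase S _ hy]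
  simp only [eval_mul, eval_C, eval_prod, eval_add, eval_X]
  field_simp

lemma harmonicFunctional_harmonicNumerator (hcard : S.card = 2 * m) (h0 : 0 ∉ S) (c f : ℝ → ℝ) :
    harmonicFunctional S f (harmonicNumerator S c) = ∑ y ∈ S, c y * f y := by
  rw [harmonicFunctional, LinearMap.coe_mk, AddHom.coe_mk, dividedDifference,
    ← Finset.sum_neg_distrib]
  refine Finset.sum_congr rfl fun y hy => ?_
  have hy0 : y ≠ 0 := ne_of_mem_of_not_mem hy h0
  have hprod : ∏ z ∈ S.erase y, (y - z) ≠ 0 :=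
    Finset.prod_ne_zero_iff.2 fun z hz => sub_ne_zero.2 (Finset.ne_of_mem_erase hz).symm
  have hflip : ∏ z ∈ S.erase y, (z - y) = -∏ z ∈ S.erase y, (y - z) := by
    have hodd : Odd (S.erase y).card := by
      have := Finset.card_pos.2 ⟨y, hy⟩
      rw [Finset.card_erase_of_mem hy, hcard]
      exact ⟨m - 1, by omega⟩
    simp only [← neg_sub y]
    rw [Finset.prod_neg, hodd.neg_one_pow, neg_one_mul]
  rw [eval_neg_harmonicNumerator hy, hflip]
  field_simp

end HarmonicCombinations

namespace OperatorMonotone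

open Polynomial

variable {f : ℝ → ℝ}

lemma stieltjesPositive_harmonicFunctional (hf : OperatorMonotone f) (h0 : 0 ≤ f 0)
    {S : Finset ℝ} {m : ℕ} (hcard : S.card = 2 * m) (hS : ∀ y ∈ S, 0 < y) :
    StieltjesPositive (2 * m - 1) (harmonicFunctional S f) := by
  have hcomp {U : ℝ[X]} (hU : U.natDegree < m) : (U.comp (-X)).degree < m := by
    refine degree_le_natDegree.trans_lt (Nat.cast_lt.2 ?_)
    rwa [natDegree_comp, natDegree_neg, natDegree_X, mul_one]
  rcases m.eq_zero_or_pos with rfl | hm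
  · rw [Finset.card_eq_zero.1 hcard]
    constructor <;> simp [harmonicFunctional, dividedDifference]
  constructor
  · intro U hU
    rw [natDegree_pow] at hU
    have hle := hf.dividedDifference_mul_sq_div_nonpos h0 hcard hS (hcomp (U := U) (by omega))
    simpa [harmonicFunctional] using hle
  · intro V hV
    rcases eq_or_ne V 0 with rfl | hV0
    · simp
    rw [natDegree_X_mul (pow_ne_zero 2 hV0), natDegree_pow] at hV
    refine (hf.dividedDifference_mul_sq_nonneg hcard (fun y hy => (hS y hy).le)
      (hcomp (U := V) (by omega))).trans_eq ?_
    rw [harmonicFunctional, LinearMap.coe_mk, AddHom.coe_mk, dividedDifference, dividedDifference,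
      ← Finset.sum_neg_distrib]
    refine Finset.sum_congr rfl fun y hy => ?_
    have hy0 := (hS y hy).ne'
    simp only [eval_comp, eval_neg, eval_X, eval_mul, eval_pow]
    field_simp

lemma sum_mul_nonneg_of_card_eq (hf : OperatorMonotone f) (h0 : 0 ≤ f 0) {S : Finset ℝ} {m : ℕ}
    (hcard : S.card = 2 * m) (hS : ∀ y ∈ S, 0 < y) {c : ℝ → ℝ}
    (hc : ∀ t ∈ Set.Icc (0 : ℝ) 1, 0 ≤ ∑ y ∈ S, c y * whm t y) : 0 ≤ ∑ y ∈ S, c y * f y := by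
  rw [← harmonicFunctional_harmonicNumerator hcard (fun h => (hS 0 h).false)]
  refine (hf.stieltjesPositive_harmonicFunctional h0 hcard hS).map_nonneg
    (hcard ▸ natDegree_harmonicNumerator_le S c) fun s hs => ?_
  rw [eval_harmonicNumerator hS c hs]
  have h1s : 0 < 1 + s := by positivity
  exact mul_nonneg
    (div_nonneg (Finset.prod_nonneg fun z hz => add_nonneg hs (hS z hz).le) h1s.le)
    (hc _ ⟨div_nonneg hs h1s.le, (div_le_one h1s).2 (by linarith)⟩)

lemma finsuppSum_mul_nonneg (hf : OperatorMonotone f) (h0 : 0 ≤ f 0) {c : Set.Ioi (0 : ℝ) →₀ ℝ}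
    (hc : ∀ t ∈ Set.Icc (0 : ℝ) 1, 0 ≤ c.sum fun y r => r * whm t y) :
    0 ≤ c.sum fun y r => r * f y := by
  obtain ⟨T, hcT, hT⟩ :=
    Infinite.exists_superset_card_eq c.support (2 * c.support.card) (by omega)
  have hsum (h : ℝ → ℝ) : (c.sum fun y r => r * h y) =
      ∑ y ∈ T.map (.subtype _), Function.extend Subtype.val c 0 y * h y := by
    rw [Finset.sum_map, c.sum_of_support_subset hcT (fun y r => r * h y) fun _ _ => zero_mul _]
    exact Finset.sum_congr rfl fun y _ => by
      rw [Function.Embedding.subtype_apply, Subtype.val_injective.extend_apply]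
  rw [hsum]
  refine hf.sum_mul_nonneg_of_card_eq h0 (by rw [Finset.card_map, hT]) (fun y hy => ?_)
    fun t ht => hsum (whm t) ▸ hc t ht
  obtain ⟨z, _, rfl⟩ := Finset.mem_map.1 hy
  exact z.2

end OperatorMonotone

section MomentProblem

lemma exists_nonneg_linearMap_comp_eq {E V : Type*} [AddCommGroup E] [Module ℝ E] [AddCommGroup V]
    [Module ℝ V] (s : PointedCone ℝ E) (Φ : V →ₗ[ℝ] E) (F : V →ₗ[ℝ] ℝ)
    (nonneg : ∀ c, Φ c ∈ s → 0 ≤ F c) (dense : ∀ y, ∃ c, Φ c + y ∈ s) :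
    ∃ G : E →ₗ[ℝ] ℝ, G ∘ₗ Φ = F ∧ ∀ y ∈ s, 0 ≤ G y := by
  have hker : LinearMap.ker Φ ≤ LinearMap.ker F := fun c hc => by
    rw [LinearMap.mem_ker] at hc ⊢
    have hneg := nonneg (-c) (by rw [map_neg, hc, neg_zero]; exact s.zero_mem)
    rw [map_neg, neg_nonneg] at hneg
    exact hneg.antisymm (nonneg c (hc ▸ s.zero_mem))
  let F' : E →ₗ.[ℝ] ℝ :=
    ⟨LinearMap.range Φ, (LinearMap.ker Φ).liftQ F hker ∘ₗ Φ.quotKerEquivRange.symm.toLinearMap⟩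
  have hF' (c : V) : F' ⟨Φ c, LinearMap.mem_range_self Φ c⟩ = F c :=
    congrArg ((LinearMap.ker Φ).liftQ F hker) (Φ.quotKerEquivRange_symm_apply_image c _)
  obtain ⟨G, hGF, hG⟩ := riesz_extension s F'
    (by rintro ⟨_, c, rfl⟩ hc; exact (nonneg c hc).trans_eq (hF' c).symm)
    (fun y => (dense y).imp' (fun c => ⟨Φ c, LinearMap.mem_range_self Φ c⟩) fun _ => id)
  exact ⟨G, LinearMap.ext fun c => (hGF ⟨Φ c, _⟩).trans (hF' c), hG⟩

open CompactlySupported CompactlySupportedContinuousMap in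
theorem exists_measure_integral_eq {X ι : Type*} [TopologicalSpace X] [CompactSpace X] [T2Space X]
    [MeasurableSpace X] [BorelSpace X] (w : ι → C(X, ℝ)) (F : ι → ℝ)
    (hF : ∀ c : ι →₀ ℝ, (∀ x, 0 ≤ c.sum fun i r => r * w i x) → 0 ≤ c.sum fun i r => r * F i)
    {i₀ : ι} (hi₀ : ∀ x, 0 < w i₀ x) :
    ∃ μ : Measure X, IsFiniteMeasure μ ∧ ∀ i, ∫ x, w i x ∂μ = F i := by
  let Φ : (ι →₀ ℝ) →ₗ[ℝ] C_c(X, ℝ) := Finsupp.linearCombination ℝ (continuousMapEquiv ∘ w)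
  have hΦ (c : ι →₀ ℝ) (x : X) : Φ c x = c.sum fun i r => r * w i x := by
    rw [Finsupp.linearCombination_apply, Finsupp.sum, coe_sum, Finset.sum_apply]
    rfl
  have : PosSMulMono ℝ C_c(X, ℝ) :=
    ⟨fun _ ha _ _ hgh x => mul_le_mul_of_nonneg_left (hgh x) ha⟩
  obtain ⟨G, hGΦ, hG⟩ := exists_nonneg_linearMap_comp_eq (PointedCone.positive ℝ C_c(X, ℝ)) Φ
    (Finsupp.linearCombination ℝ F)
    (fun c hc => hF c fun x => hΦ c x ▸ hc x)
    (fun g => by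
      obtain ⟨b, hb⟩ := (isCompact_range (g.continuous.div (w i₀).continuous
        fun x => (hi₀ x).ne')).bddBelow
      refine ⟨.single i₀ (-b), fun x => ?_⟩
      have hbx : b ≤ g x / w i₀ x := hb ⟨x, rfl⟩
      rw [le_div_iff₀ (hi₀ x)] at hbx
      change 0 ≤ Φ (.single i₀ (-b)) x + g x
      rw [hΦ, Finsupp.sum_single_index (zero_mul _)]
      linarith)
  let Λ : C_c(X, ℝ) →ₚ[ℝ] ℝ := .mk₀ G hG
  refine ⟨RealRMK.rieszMeasure Λ, inferInstance, fun i => ?_⟩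
  calc ∫ x, w i x ∂(RealRMK.rieszMeasure Λ) = G (Φ (.single i 1)) := by
        rw [Finsupp.linearCombination_single, one_smul]
        exact RealRMK.integral_rieszMeasure Λ (continuousMapEquiv (w i))
    _ = F i := by rw [← LinearMap.comp_apply, hGΦ, Finsupp.linearCombination_single, one_smul]

end MomentProblem

namespace OperatorMonotone

theorem exists_eq_integral_whm {f : ℝ → ℝ} (hf : OperatorMonotone f)
    (hcont : ContinuousWithinAt f (Set.Ici 0) 0) (h0 : 0 ≤ f 0) :
    ∃ μ : Measure (Set.Icc (0 : ℝ) 1), IsFiniteMeasure μ ∧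
      ∀ x, 0 ≤ x → f x = ∫ t : Set.Icc (0 : ℝ) 1, whm t x ∂μ := by
  obtain ⟨μ, hμ, hrep⟩ := exists_measure_integral_eq
    (fun y : Set.Ioi (0 : ℝ) => ⟨fun t : Set.Icc (0 : ℝ) 1 => whm t y, continuous_whm_left y.2⟩)
    (fun y => f y) (fun c hc => hf.finsuppSum_mul_nonneg h0 fun t ht => hc ⟨t, ht⟩)
    (i₀ := ⟨1, Set.mem_Ioi.2 one_pos⟩) fun t => whm_pos t.2 one_pos
  refine ⟨μ, hμ, fun x hx => ?_⟩
  rcases hx.eq_or_lt with rfl | hx0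
  · have hIoi {h : ℝ → ℝ} (hh : ContinuousWithinAt h (Set.Ici 0) 0) :=
      (hh.mono Set.Ioi_subset_Ici_self).tendsto
    refine tendsto_nhds_unique_of_eventuallyEq (hIoi hcont)
      (hIoi (continuousWithinAt_integral_whm_zero μ)) ?_
    filter_upwards [self_mem_nhdsWithin] with x hx using (hrep ⟨x, hx⟩).symm
  · exact (hrep ⟨x, hx0⟩).symm

end OperatorMonotone

section MeasureDecomposition

variable {X : Type*} [MeasurableSpace X] [MeasurableSingletonClass X]

/-- The set of points that a measure charges; it carries the discrete part of the measure. -/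
def chargedPoints (σ : Measure X) : Set X :=
  {t | 0 < σ {t}}

lemma countable_chargedPoints (σ : Measure X) [IsFiniteMeasure σ] : (chargedPoints σ).Countable :=
  Measure.countable_meas_pos_of_disjoint_iUnion measurableSet_singleton
    fun _ _ hst => Set.disjoint_singleton.2 hst

lemma restrict_compl_chargedPoints_singleton (σ : Measure X) (t : X) :
    σ.restrict (chargedPoints σ)ᶜ {t} = 0 := by
  rw [Measure.restrict_apply (measurableSet_singleton t)]
  by_cases ht : t ∈ chargedPoints σ
  · rw [Set.singleton_inter_eq_empty.2 (Set.notMem_compl_iff.2 ht), measure_empty]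
  · exact measure_mono_null Set.inter_subset_left (nonpos_iff_eq_zero.1 (not_lt.1 ht))

lemma summable_measureReal_singleton (σ : Measure X) [IsFiniteMeasure σ] :
    Summable fun t => σ.real {t} := by
  refine ENNReal.summable_toReal (ne_top_of_le_ne_top (measure_ne_top σ (⋃ t, {t})) ?_)
  exact tsum_meas_le_meas_iUnion_of_disjoint σ measurableSet_singleton
    fun _ _ hst => Set.disjoint_singleton.2 hst

variable {E : Type*} [NormedAddCommGroup E] [NormedSpace ℝ E] [CompleteSpace E]

lemma integral_eq_integral_rnDeriv_add_tsum_add_integral (μ ν : Measure X) [IsFiniteMeasure μ]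
    [SigmaFinite ν] {h : X → E} (hh : Integrable h μ) :
    ∫ t, h t ∂μ = ∫ t, (μ.rnDeriv ν t).toReal • h t ∂ν +
      ∑' s : chargedPoints (μ.singularPart ν), (μ.singularPart ν).real {(s : X)} • h s +
      ∫ t in (chargedPoints (μ.singularPart ν))ᶜ, h t ∂μ.singularPart ν := by
  have hac := hh.mono_measure (Measure.withDensity_rnDeriv_le μ ν)
  have hsing := hh.mono_measure (Measure.singularPart_le μ ν)
  have hcount := countable_chargedPoints (μ.singularPart ν)
  rw [add_assoc, ← setIntegral_countable h hcount hsing.integrableOn,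
    integral_add_compl hcount.measurableSet hsing,
    ← integral_withDensity_eq_integral_toReal_smul (Measure.measurable_rnDeriv μ ν)
      (Measure.rnDeriv_lt_top μ ν), ← integral_add_measure hac hsing,
    Measure.rnDeriv_add_singularPart]

end MeasureDecomposition

instance isFiniteMeasure_lebIcc : IsFiniteMeasure lebIcc :=
  inferInstanceAs (IsFiniteMeasure (volume : Measure unitInterval))

theorem stmt18 (f : ℝ → ℝ) (hc : ContinuousOn f (Set.Ici 0))
    (hnn : ∀ x : ℝ, 0 ≤ x → 0 ≤ f x) (hm : OperatorMonotone f) :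
    ∃ (g : Set.Icc (0 : ℝ) 1 → ℝ) (D : Set (Set.Icc (0 : ℝ) 1))
      (a : Set.Icc (0 : ℝ) 1 → ℝ) (μsc : Measure (Set.Icc (0 : ℝ) 1)),
      -- the density of the absolutely continuous part
      (∀ t, 0 ≤ g t) ∧ Integrable g lebIcc ∧
      -- the data of the singularly discrete part
      D.Countable ∧ (∀ t ∈ D, 0 ≤ a t) ∧ Summable (fun t : D => a (t : Set.Icc (0 : ℝ) 1)) ∧
      -- the measure of the singularly continuous part
      IsFiniteMeasure μsc ∧ (∀ t, μsc {t} = 0) ∧ Measure.MutuallySingular μsc lebIcc ∧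
      -- the decomposition
      (∀ x : ℝ, 0 ≤ x →
        f x = (∫ t, g t * whm (t : ℝ) x ∂lebIcc) +
          (∑' s : D, a (s : Set.Icc (0 : ℝ) 1) * whm ((s : Set.Icc (0 : ℝ) 1) : ℝ) x) +
          ∫ t, whm (t : ℝ) x ∂μsc) ∧
      -- each summand is operator monotone
      OperatorMonotone (fun x => ∫ t, g t * whm (t : ℝ) x ∂lebIcc) ∧
      OperatorMonotone
        (fun x => ∑' s : D, a (s : Set.Icc (0 : ℝ) 1) * whm ((s : Set.Icc (0 : ℝ) 1) : ℝ) x) ∧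
      OperatorMonotone (fun x => ∫ t, whm (t : ℝ) x ∂μsc) := by
  obtain ⟨μ, _, hrep⟩ := hm.exists_eq_integral_whm (hc 0 Set.self_mem_Ici) (hnn 0 le_rfl)
  let σ := μ.singularPart lebIcc
  let D := chargedPoints σ
  have hD : D.Countable := countable_chargedPoints σ
  have hac (x : ℝ) : ∫ t, (μ.rnDeriv lebIcc t).toReal * whm t x ∂lebIcc =
      ∫ t : Set.Icc (0 : ℝ) 1, whm t x ∂lebIcc.withDensity (μ.rnDeriv lebIcc) :=
    (integral_withDensity_eq_integral_toReal_smul (Measure.measurable_rnDeriv _ _)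
      (Measure.rnDeriv_lt_top _ _) _).symm
  have hdisc (x : ℝ) (hx : 0 ≤ x) : ∑' s : D, σ.real {s.1} * whm s x =
      ∫ t : Set.Icc (0 : ℝ) 1 in D, whm t x ∂σ :=
    (setIntegral_countable _ hD (integrable_whm σ hx).integrableOn).symm
  exact ⟨fun t => (μ.rnDeriv lebIcc t).toReal, D, fun t => σ.real {t}, σ.restrict Dᶜ,
    fun _ => ENNReal.toReal_nonneg, Measure.integrable_toReal_rnDeriv,
    hD, fun _ _ => measureReal_nonneg, (summable_measureReal_singleton σ).subtype D,
    inferInstance, restrict_compl_chargedPoints_singleton σ,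
    (Measure.mutuallySingular_singularPart μ lebIcc).mono Measure.restrict_le_self le_rfl,
    fun x hx => (hrep x hx).trans
      (integral_eq_integral_rnDeriv_add_tsum_add_integral μ lebIcc (integrable_whm μ hx)),
    (operatorMonotone_integral_whm _).congr fun x _ => hac x,
    (operatorMonotone_integral_whm _).congr hdisc,
    operatorMonotone_integral_whm _⟩
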